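/- arXiv:2203.12840 — 5 statements merged into one kernel-verified Lean document; each statement's English description precedes it below -/
import Mathlib

section
/- Let V be a finite nonempty type and S : V → V → ℝ a pairwise similarity with S i j ≥ 0 for all i, j, and let F(C) = ∑_{i ∈ V} max_{j ∈ C} S i j be the facility-location set function. Then F has diminishing returns: for all finite subsets A ⊆ B of V and every x ∈ V with x ∉ B, F(A ∪ {x}) − F(A) ≥ F(B ∪ {x}) − F(B). -/
/-! Pointwise in `i`, adding `x` replaces the current maximum `m` by `max m (S i x)`
(`maxOr0_union_singleton`; nonnegativity makes this correct also for the empty set, where `m = 0`).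
Since `m ↦ max m s - m` is antitone and `m` grows with the set (`maxOr0_mono`), each summand has
diminishing returns, hence so does the sum. -/

/-- Max of `f` over a finite set, taken to be `0` on the empty set. -/
noncomputable def maxOr0 {V : Type*} (C : Finset V) (f : V → ℝ) : ℝ :=
  if h : C.Nonempty then C.sup' h f else 0

/-- The facility-location set function `F(C) = ∑ i, max_{j ∈ C} S i j`. -/
noncomputable def facilityLocation {V : Type*} [Fintype V] (S : V → V → ℝ)
    (C : Finset V) : ℝ :=
  ∑ i : V, maxOr0 C (S i)

theorem maxOr0_union_singleton {V : Type*} [DecidableEq V] (C : Finset V) (f : V → ℝ)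
    (hf : ∀ j, 0 ≤ f j) (x : V) : maxOr0 (C ∪ {x}) f = max (maxOr0 C f) (f x) := by
  rcases C.eq_empty_or_nonempty with rfl | h
  · simp [maxOr0, hf x]
  · have h' : (C ∪ {x}).Nonempty := h.mono Finset.subset_union_left
    rw [maxOr0, maxOr0, dif_pos h', dif_pos h,
      Finset.sup'_union h (Finset.singleton_nonempty x), Finset.sup'_singleton]

theorem maxOr0_mono {V : Type*} {A B : Finset V} (hAB : A ⊆ B) (f : V → ℝ)
    (hf : ∀ j, 0 ≤ f j) : maxOr0 A f ≤ maxOr0 B f := by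
  rcases A.eq_empty_or_nonempty with rfl | h
  · by_cases hB : B.Nonempty
    · obtain ⟨b, hb⟩ := hB
      have hB : B.Nonempty := ⟨b, hb⟩
      simpa [maxOr0, hB] using (⟨b, hb, hf b⟩ : ∃ b ∈ B, 0 ≤ f b)
    · simp [maxOr0, hB]
  · rw [maxOr0, maxOr0, dif_pos h, dif_pos (h.mono hAB)]
    exact Finset.sup'_mono f hAB h

theorem stmt_5 {V : Type*} [Fintype V] [Nonempty V] [DecidableEq V] (S : V → V → ℝ)
    (hS : ∀ i j, 0 ≤ S i j) :
    ∀ A B : Finset V, A ⊆ B → ∀ x : V, x ∉ B →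
      facilityLocation S (B ∪ {x}) - facilityLocation S B ≤
        facilityLocation S (A ∪ {x}) - facilityLocation S A := by
  intro A B hAB x _
  simp only [facilityLocation, ← Finset.sum_sub_distrib]
  refine Finset.sum_le_sum fun i _ => ?_
  rw [maxOr0_union_singleton B _ (hS i), maxOr0_union_singleton A _ (hS i)]
  have hm := maxOr0_mono hAB (S i) (hS i)
  grind
end

section
/- (Existence of a good greedy element) Let V be a finite nonempty type and f : Finset V → ℝ a monotone submodular set function. Then for every finite subset A of V and every nonempty finite subset B of V, there exists an element x ∈ B such that f(A ∪ {x}) − f(A) ≥ (f(B) − f(A)) / |B|. -/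
/-!
By submodularity and monotonicity, the gain `f (A ∪ B) - f A` is at most the sum over `x ∈ B` of
the single-element gains `f (insert x A) - f A` (`gain_le_sum`). As `f B ≤ f (A ∪ B)`, these
gains sum to at least `f B - f A`, so one of them is at least the average `(f B - f A) / |B|`.
-/

/-- A set function on finite subsets of `V` is submodular. -/
def Submodular {V : Type*} [DecidableEq V] (f : Finset V → ℝ) : Prop :=
  ∀ A B : Finset V, f (A ∪ B) + f (A ∩ B) ≤ f A + f B

/-- Submodularity is applied to `A ∪ s` and `insert a A`, whose intersection contains `A`. -/
theorem gain_le_sum {V : Type*} [DecidableEq V]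
    (f : Finset V → ℝ) (hf : Submodular f)
    (hmono : ∀ A B : Finset V, A ⊆ B → f A ≤ f B) (A B : Finset V) :
    f (A ∪ B) - f A ≤ ∑ x ∈ B, (f (insert x A) - f A) := by
  induction B using Finset.induction_on with
  | empty => simp
  | insert a s ha ih =>
    rw [Finset.sum_insert ha]
    have h1 := hf (A ∪ s) (insert a A)
    have h2 : f A ≤ f ((A ∪ s) ∩ insert a A) :=
      hmono _ _ (Finset.subset_inter Finset.subset_union_left (Finset.subset_insert a A))
    have h3 : (A ∪ s) ∪ insert a A = A ∪ insert a s := by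
      ext y
      simp only [Finset.mem_union, Finset.mem_insert]
      tauto
    rw [h3] at h1
    linarith

theorem stmt_9 {V : Type*} [Fintype V] [Nonempty V] [DecidableEq V]
    (f : Finset V → ℝ) (hf : Submodular f)
    (hmono : ∀ A B : Finset V, A ⊆ B → f A ≤ f B) :
    ∀ A B : Finset V, B.Nonempty →
      ∃ x ∈ B, (f B - f A) / B.card ≤ f (insert x A) - f A := by
  intro A B hB
  apply Finset.exists_le_of_sum_le hB
  have hcard : (B.card : ℝ) ≠ 0 := by exact_mod_cast hB.card_pos.ne'
  rw [Finset.sum_const, nsmul_eq_mul, mul_div_cancel₀ _ hcard]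
  have h1 := gain_le_sum f hf hmono A B
  have h2 : f B ≤ f (A ∪ B) := hmono _ _ Finset.subset_union_right
  linarith
end

section
/- (One-step greedy contraction) Let V be a finite nonempty type, f : Finset V → ℝ a monotone submodular set function, and κ ≥ 1 a natural number. Let G be a finite subset of V and let g ∈ V satisfy f(G ∪ {g}) ≥ f(G ∪ {x}) for all x ∈ V. Then for every finite subset OPT of V with |OPT| ≤ κ, f(OPT) − f(G ∪ {g}) ≤ (1 − 1/κ) · (f(OPT) − f(G)). -/
/-- If each single-element marginal gain over `G` is at most `d`, then adding a set `S` to `G` gains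
at most `|S| * d`. -/
theorem le_add_card_mul_of_marginal_le {V : Type*} [DecidableEq V]
    {f : Finset V → ℝ} (hf : Submodular f)
    (hmono : ∀ A B : Finset V, A ⊆ B → f A ≤ f B)
    {G : Finset V} {d : ℝ} (hd : ∀ x : V, f (insert x G) ≤ f G + d) (S : Finset V) :
    f (G ∪ S) ≤ f G + S.card * d := by
  induction S using Finset.induction_on with
  | empty => simp
  | insert a S ha ih =>
    have hsub := hf (insert a G) (G ∪ S)
    have hunion : insert a G ∪ (G ∪ S) = G ∪ insert a S := by
      ext x
      simp only [Finset.mem_union, Finset.mem_insert]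
      tauto
    have hinter : f G ≤ f (insert a G ∩ (G ∪ S)) :=
      hmono _ _ (Finset.subset_inter (Finset.subset_insert _ _) Finset.subset_union_left)
    rw [hunion] at hsub
    rw [Finset.card_insert_of_notMem ha]
    push_cast
    linarith [hd a]

theorem stmt_10 {V : Type*} [Fintype V] [Nonempty V] [DecidableEq V]
    (f : Finset V → ℝ) (hf : Submodular f)
    (hmono : ∀ A B : Finset V, A ⊆ B → f A ≤ f B)
    (κ : ℕ) (hκ : 1 ≤ κ)
    (G : Finset V) (g : V) (hg : ∀ x : V, f (insert x G) ≤ f (insert g G)) :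
    ∀ OPT : Finset V, OPT.card ≤ κ →
      f OPT - f (insert g G) ≤ (1 - 1 / (κ : ℝ)) * (f OPT - f G) := by
  intro OPT hcard
  have hgain : 0 ≤ f (insert g G) - f G :=
    sub_nonneg.2 (hmono _ _ (Finset.subset_insert _ _))
  have hbound := le_add_card_mul_of_marginal_le hf hmono (G := G) (d := f (insert g G) - f G)
    (fun x => by linarith [hg x]) OPT
  have hOPT : f OPT ≤ f (G ∪ OPT) := hmono _ _ Finset.subset_union_right
  have hmul : (OPT.card : ℝ) * (f (insert g G) - f G) ≤ κ * (f (insert g G) - f G) :=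
    mul_le_mul_of_nonneg_right (by exact_mod_cast hcard) hgain
  have hκ' : (0 : ℝ) < κ := by exact_mod_cast hκ
  have hdiv : (f OPT - f G) / κ ≤ f (insert g G) - f G := by
    rw [div_le_iff₀ hκ']
    linarith
  have hexpand : (1 - 1 / (κ : ℝ)) * (f OPT - f G) = (f OPT - f G) - (f OPT - f G) / κ := by
    ring
  linarith
end

section
/- (Greedy t-step guarantee) Let V be a finite nonempty type, f : Finset V → ℝ a monotone submodular set function with f(∅) = 0, and κ ≥ 1 a natural number. Let G : ℕ → Finset V be a greedy sequence: G 0 = ∅ and for each t there is g_t ∈ V with G (t+1) = G t ∪ {g_t} and f(G (t+1)) ≥ f(G t ∪ {x}) for all x ∈ V. Then for every t and every finite subset OPT of V with |OPT| ≤ κ, f(G t) ≥ (1 − (1 − 1/κ)^t) · f(OPT). -/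
/-- If no single element raises `f` above `f A` by more than `d`, then no set `S` raises it by
more than `|S| * d`: by submodularity marginal gains only shrink as elements are added. -/
lemma Submodular.union_le_add_card_mul {V : Type*} [DecidableEq V] {f : Finset V → ℝ}
    (hf : Submodular f) (hmono : ∀ A B : Finset V, A ⊆ B → f A ≤ f B)
    (A : Finset V) (d : ℝ) (hd : ∀ x, f (insert x A) ≤ f A + d) (S : Finset V) :
    f (A ∪ S) ≤ f A + S.card * d := by
  induction S using Finset.induction_on with
  | empty => simp
  | insert x S hx ih =>
    have hsub := hf (insert x A) (A ∪ S)
    have hunion : insert x A ∪ (A ∪ S) = A ∪ insert x S := by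
      ext y; simp only [Finset.mem_union, Finset.mem_insert]; tauto
    have hinter : f A ≤ f (insert x A ∩ (A ∪ S)) :=
      hmono _ _ (Finset.subset_inter (Finset.subset_insert _ _) Finset.subset_union_left)
    rw [hunion] at hsub
    rw [Finset.card_insert_of_notMem hx]
    push_cast
    linarith [hd x]

theorem stmt_11 {V : Type*} [Fintype V] [Nonempty V] [DecidableEq V]
    (f : Finset V → ℝ) (hf : Submodular f)
    (hmono : ∀ A B : Finset V, A ⊆ B → f A ≤ f B)
    (hempty : f (∅ : Finset V) = 0)
    (κ : ℕ) (hκ : 1 ≤ κ)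
    (G : ℕ → Finset V) (hG0 : G 0 = ∅)
    (hgreedy : ∀ t : ℕ, ∃ g : V, G (t + 1) = insert g (G t) ∧
      ∀ x : V, f (insert x (G t)) ≤ f (G (t + 1))) :
    ∀ (t : ℕ) (OPT : Finset V), OPT.card ≤ κ →
      (1 - (1 - 1 / (κ : ℝ)) ^ t) * f OPT ≤ f (G t) := by
  intro t OPT hcard
  have hκ' : (1 : ℝ) ≤ κ := by exact_mod_cast hκ
  have hκ0 : (0 : ℝ) < κ := by linarith
  induction t with
  | zero => simp [hG0, hempty]
  | succ t ih =>
    obtain ⟨g, hg, hbest⟩ := hgreedy t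
    have hgain : 0 ≤ f (G (t + 1)) - f (G t) := by
      rw [hg]
      exact sub_nonneg.2 (hmono _ _ (Finset.subset_insert _ _))
    have hunion := hf.union_le_add_card_mul hmono (G t) (f (G (t + 1)) - f (G t))
      (fun x => by linarith [hbest x]) OPT
    have hopt : f OPT ≤ f (G t ∪ OPT) := hmono _ _ Finset.subset_union_right
    have hcard' : (OPT.card : ℝ) * (f (G (t + 1)) - f (G t)) ≤ κ * (f (G (t + 1)) - f (G t)) :=
      mul_le_mul_of_nonneg_right (by exact_mod_cast hcard) hgain
    have hstep : 1 / (κ : ℝ) * (f OPT - f (G t)) ≤ f (G (t + 1)) - f (G t) := by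
      rw [one_div, inv_mul_le_iff₀ hκ0]
      linarith
    have hfactor : 0 ≤ 1 - 1 / (κ : ℝ) := sub_nonneg.2 ((div_le_one hκ0).2 hκ')
    have hih := mul_le_mul_of_nonneg_left ih hfactor
    calc (1 - (1 - 1 / (κ : ℝ)) ^ (t + 1)) * f OPT
        = (1 - 1 / (κ : ℝ)) * ((1 - (1 - 1 / (κ : ℝ)) ^ t) * f OPT) + 1 / (κ : ℝ) * f OPT := by
          ring
      _ ≤ f (G (t + 1)) := by linarith
end

section
/- (Theorem 1, greedy guarantee) Let V be a finite nonempty type, f : Finset V → ℝ a monotone submodular set function with f(∅) = 0, and κ ≥ 1 a natural number. Let G : ℕ → Finset V be a greedy sequence: G 0 = ∅ and for each t there is g_t ∈ V with G (t+1) = G t ∪ {g_t} and f(G (t+1)) ≥ f(G t ∪ {x}) for all x ∈ V. Then the κ-step greedy solution is no worse than (1 − e⁻¹) of the optimal solution: for every finite subset OPT of V with |OPT| ≤ κ, f(G κ) ≥ (1 − e⁻¹) · f(OPT). -/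
/-- If no single element raises `f A` above `c`, then a set `S` raises it by at most
`S.card * (c - f A)`: by submodularity the marginal gain of an element only decreases as
the elements of `S` are added. -/
theorem Submodular.union_le {V : Type*} [DecidableEq V] {f : Finset V → ℝ} (hf : Submodular f)
    (hmono : ∀ A B : Finset V, A ⊆ B → f A ≤ f B) {A : Finset V} {c : ℝ}
    (hc : ∀ x : V, f (insert x A) ≤ c) (S : Finset V) :
    f (A ∪ S) ≤ f A + S.card * (c - f A) := by
  induction S using Finset.induction_on with
  | empty => simp
  | insert x S hx ih =>
    have h1 := hf (insert x A) (A ∪ S)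
    have h2 : insert x A ∪ (A ∪ S) = A ∪ insert x S := by
      ext y
      simp only [Finset.mem_union, Finset.mem_insert]
      tauto
    have h3 : f A ≤ f (insert x A ∩ (A ∪ S)) :=
      hmono _ _ (Finset.subset_inter (Finset.subset_insert _ _) Finset.subset_union_left)
    rw [h2] at h1
    rw [Finset.card_insert_of_notMem hx]
    push_cast
    linarith [hc x]

theorem stmt_13 {V : Type*} [Fintype V] [Nonempty V] [DecidableEq V]
    (f : Finset V → ℝ) (hf : Submodular f)
    (hmono : ∀ A B : Finset V, A ⊆ B → f A ≤ f B)
    (hempty : f (∅ : Finset V) = 0)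
    (κ : ℕ) (hκ : 1 ≤ κ)
    (G : ℕ → Finset V) (hG0 : G 0 = ∅)
    (hgreedy : ∀ t : ℕ, ∃ g : V, G (t + 1) = insert g (G t) ∧
      ∀ x : V, f (insert x (G t)) ≤ f (G (t + 1))) :
    ∀ OPT : Finset V, OPT.card ≤ κ →
      (1 - Real.exp (-1)) * f OPT ≤ f (G κ) := by
  intro OPT hcard
  have hκpos : (0 : ℝ) < κ := by exact_mod_cast hκ
  have hcard' : (OPT.card : ℝ) ≤ κ := by exact_mod_cast hcard
  have hOPT : 0 ≤ f OPT := hempty ▸ hmono _ _ (Finset.empty_subset _)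
  have hstep : ∀ t, f OPT - f (G (t + 1)) ≤ (1 - 1 / κ) * (f OPT - f (G t)) := by
    intro t
    obtain ⟨g, hg, hmax⟩ := hgreedy t
    have hinc : f (G t) ≤ f (G (t + 1)) := hmono _ _ (hg ▸ Finset.subset_insert _ _)
    have hgap : f OPT - f (G t) ≤ κ * (f (G (t + 1)) - f (G t)) := by
      have h1 := hf.union_le hmono hmax OPT
      have h2 : f OPT ≤ f (G t ∪ OPT) := hmono _ _ Finset.subset_union_right
      have h3 := mul_le_mul_of_nonneg_right hcard' (sub_nonneg.2 hinc)
      linarith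
    have hdiv : (f OPT - f (G t)) / κ ≤ f (G (t + 1)) - f (G t) := (div_le_iff₀' hκpos).2 hgap
    have hexpand : (1 - 1 / (κ : ℝ)) * (f OPT - f (G t))
        = (f OPT - f (G t)) - (f OPT - f (G t)) / κ := by ring
    linarith
  have hfactor : (0 : ℝ) ≤ 1 - 1 / κ := by
    rw [sub_nonneg, div_le_one hκpos]
    exact_mod_cast hκ
  have hdecay : ∀ t, f OPT - f (G t) ≤ (1 - 1 / (κ : ℝ)) ^ t * f OPT := by
    intro t
    induction t with
    | zero => simp [hG0, hempty]
    | succ t ih =>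
      calc f OPT - f (G (t + 1)) ≤ (1 - 1 / κ) * (f OPT - f (G t)) := hstep t
        _ ≤ (1 - 1 / κ) * ((1 - 1 / (κ : ℝ)) ^ t * f OPT) := mul_le_mul_of_nonneg_left ih hfactor
        _ = (1 - 1 / (κ : ℝ)) ^ (t + 1) * f OPT := by ring
  have hexp : (1 - 1 / (κ : ℝ)) ^ κ ≤ Real.exp (-1) :=
    Real.one_sub_div_pow_le_exp_neg (by exact_mod_cast hκ)
  have hfin := mul_le_mul_of_nonneg_right hexp hOPT
  linarith [hdecay κ]
end
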